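/- arXiv:2601.22829 — 2 statements merged into one kernel-verified Lean document; each statement's English description precedes it below -/
import Mathlib

section
/- Let X be a real Hilbert space, T₀ a compact self-adjoint operator, μ̄ a nonzero eigenvalue of T₀ of multiplicity m, and U a bounded open interval with closure(U) ∩ σ(T₀) = {μ̄}. Then for any compact self-adjoint T sufficiently close to T₀ in operator norm, every eigenvalue of T in U has multiplicity at most m (upper semicontinuity of multiplicity under perturbation). -/
theorem stmt9_lower {X : Type*} [NormedAddCommGroup X] [InnerProductSpace ℝ X] [CompleteSpace X]
    (T₀ : X →L[ℝ] X) (hcomp : IsCompactOperator T₀) (hsa : IsSelfAdjoint T₀)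
    (μ : ℝ) (hμ : μ ≠ 0) (t : ℝ) (ht : t = μ ∨ t ∉ spectrum ℝ T₀) :
    ∃ c > 0, ∀ x ∈ (Module.End.eigenspace (T₀ : X →ₗ[ℝ] X) μ)ᗮ, c * ‖x‖ ≤ ‖T₀ x - t • x‖ := by
  rcases ht with rfl | ht
  · have hsym : (T₀ : X →ₗ[ℝ] X).IsSymmetric := hsa.isSymmetric
    have hinv := hsym.invariant_orthogonalComplement_eigenspace t
    set V := (Module.End.eigenspace (T₀ : X →ₗ[ℝ] X) t)ᗮ with hV
    let S : V →L[ℝ] V := (T₀.comp V.subtypeL).codRestrict V (fun x => hinv x x.2)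
    have hS : IsCompactOperator S := by
      exact IsCompactOperator.restrict' (f := (T₀ : X →ₗ[ℝ] X)) hcomp hinv
    have hne : ¬ Module.End.HasEigenvalue (S : Module.End ℝ V) t := by
      intro h
      obtain ⟨v, hv⟩ := h.exists_hasEigenvector
      have h1 : T₀ v = t • (v : X) := congrArg Subtype.val hv.apply_eq_smul
      have h2 : (v : X) ∈ Module.End.eigenspace (T₀ : X →ₗ[ℝ] X) t :=
        Module.End.mem_eigenspace_iff.2 h1
      have h3 : inner ℝ (v : X) (v : X) = 0 := v.2 _ h2
      exact hv.2 (Subtype.ext (inner_self_eq_zero.1 h3))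
    have := hS.antilipschitz_of_not_hasEigenvalue hμ hne
    rw [antilipschitzWith_iff_exists_mul_le_norm] at this
    obtain ⟨c, hc, h⟩ := this
    exact ⟨c, hc, fun x hx => h ⟨x, hx⟩⟩
  · rw [spectrum.notMem_iff] at ht
    obtain ⟨u, hu⟩ := ht
    refine ⟨(‖(↑u⁻¹ : X →L[ℝ] X)‖ + 1)⁻¹, by positivity, fun x _ => ?_⟩
    rw [inv_mul_le_iff₀ (by positivity)]
    have h1 : (↑u⁻¹ : X →L[ℝ] X) ((u : X →L[ℝ] X) x) = x := by
      rw [← ContinuousLinearMap.mul_apply, Units.inv_mul]; rfl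
    have h2 : (u : X →L[ℝ] X) x = t • x - T₀ x := by
      rw [hu]; simp [Algebra.algebraMap_eq_smul_one]
    calc ‖x‖ = ‖(↑u⁻¹ : X →L[ℝ] X) (t • x - T₀ x)‖ := by rw [← h2, h1]
      _ ≤ ‖(↑u⁻¹ : X →L[ℝ] X)‖ * ‖t • x - T₀ x‖ := ContinuousLinearMap.le_opNorm _ _
      _ ≤ _ := by
        rw [norm_sub_rev]; gcongr; linarith

/-- Upper semicontinuity of multiplicity: let `T₀` be a compact self-adjoint operator,
`μ̄ ≠ 0` an eigenvalue of `T₀` of multiplicity `m`, and `U = (a, b)` a bounded open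
interval with `closure U ∩ σ(T₀) = {μ̄}`. Then for any compact self-adjoint `T`
sufficiently close to `T₀` in operator norm, every eigenvalue of `T` in `U` has
multiplicity at most `m`. -/
theorem stmt9 {X : Type*} [NormedAddCommGroup X] [InnerProductSpace ℝ X] [CompleteSpace X]
    (T₀ : X →L[ℝ] X) (hcomp : IsCompactOperator T₀) (hsa : IsSelfAdjoint T₀)
    (μ : ℝ) (hμ : μ ≠ 0) (m : ℕ)
    (heig : Module.End.HasEigenvalue (T₀ : X →ₗ[ℝ] X) μ)
    (hmult : Module.finrank ℝ (Module.End.eigenspace (T₀ : X →ₗ[ℝ] X) μ) = m)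
    (a b : ℝ) (hU : closure (Set.Ioo a b) ∩ spectrum ℝ T₀ = {μ}) :
    ∃ ε > 0, ∀ T : X →L[ℝ] X, IsCompactOperator T → IsSelfAdjoint T → ‖T - T₀‖ < ε →
      ∀ t ∈ Set.Ioo a b,
        Module.finrank ℝ (Module.End.eigenspace (T : X →ₗ[ℝ] X) t) ≤ m := by
  have hK : IsCompact (closure (Set.Ioo a b)) := (Metric.isBounded_Ioo a b).isCompact_closure
  set E := Module.End.eigenspace (T₀ : X →ₗ[ℝ] X) μ with hE
  haveI hfin : FiniteDimensional ℝ E := 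
    ContinuousLinearMap.finite_dimensional_eigenspace hcomp μ hμ
  have key : ∃ c > 0, ∀ t ∈ closure (Set.Ioo a b), ∀ x ∈ Eᗮ, c * ‖x‖ ≤ ‖T₀ x - t • x‖ := by
    refine hK.induction_on (p := fun s => ∃ c > 0, ∀ t ∈ s, ∀ x ∈ Eᗮ, c * ‖x‖ ≤ ‖T₀ x - t • x‖)
      ?_ ?_ ?_ ?_
    · exact ⟨1, one_pos, by simp⟩
    · rintro s s' hss ⟨c, hc, h⟩
      exact ⟨c, hc, fun t ht => h t (hss ht)⟩
    · rintro s s' ⟨c, hc, h⟩ ⟨c', hc', h'⟩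
      refine ⟨min c c', lt_min hc hc', ?_⟩
      rintro t (ht | ht) x hx
      · exact le_trans (by gcongr; exact min_le_left _ _) (h t ht x hx)
      · exact le_trans (by gcongr; exact min_le_right _ _) (h' t ht x hx)
    · intro t ht
      have ht' : t = μ ∨ t ∉ spectrum ℝ T₀ := by
        by_cases h : t ∈ spectrum ℝ T₀
        · left
          have : t ∈ closure (Set.Ioo a b) ∩ spectrum ℝ T₀ := ⟨ht, h⟩
          rw [hU] at this
          exact this
        · exact Or.inr h
      obtain ⟨c, hc, h⟩ := stmt9_lower T₀ hcomp hsa μ hμ t ht'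
      refine ⟨Metric.ball t (c / 2), mem_nhdsWithin_of_mem_nhds
        (Metric.ball_mem_nhds t (by positivity)), c / 2, by positivity, ?_⟩
      intro s hs x hx
      have h1 := h x hx
      have h2 : T₀ x - t • x = (T₀ x - s • x) + (s - t) • x := by rw [sub_smul]; abel
      have h3 : ‖(s - t) • x‖ ≤ c / 2 * ‖x‖ := by
        rw [norm_smul]
        gcongr
        rw [← dist_eq_norm]
        exact (Metric.mem_ball.1 hs).le
      have h4 := norm_add_le (T₀ x - s • x) ((s - t) • x)
      rw [← h2] at h4
      linarith
  obtain ⟨c, hc, h⟩ := key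
  refine ⟨c, hc, fun T _ _ hT t ht => ?_⟩
  rw [← hmult]
  let f : Module.End.eigenspace (T : X →ₗ[ℝ] X) t →ₗ[ℝ] E :=
    (E.orthogonalProjection : X →ₗ[ℝ] E).comp (Submodule.subtype _)
  refine LinearMap.finrank_le_finrank_of_injective (f := f) ?_
  rw [injective_iff_map_eq_zero]
  rintro ⟨x, hx⟩ hfx
  have hx1 : T x = t • x := Module.End.mem_eigenspace_iff.1 hx
  have hx2 : x ∈ Eᗮ := by
    rw [← Submodule.orthogonalProjection_eq_zero_iff]
    exact hfx
  have h1 := h t (subset_closure ht) x hx2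
  have h2 : T₀ x - t • x = - (T - T₀) x := by simp [hx1]
  rw [h2, norm_neg] at h1
  have h3 := (T - T₀).le_opNorm x
  have h4 : ‖x‖ = 0 := by
    by_contra hne
    have : 0 < ‖x‖ := lt_of_le_of_ne (norm_nonneg x) (Ne.symm hne)
    nlinarith
  exact Subtype.ext (norm_eq_zero.1 h4)
end

section
/- Let ψ : ℝⁿ → ℝⁿ be C¹, Ω ⊂ ℝⁿ a bounded open set, and for ε small set Ω_ε = (I + εψ)(Ω). For u, φ ∈ C²(ℝⁿ), define 𝒜(ε) = ∫_{Ω_ε} ∇(u ∘ (I+εψ)^{-1}) · ∇(φ ∘ (I+εψ)^{-1}) dξ. Then 𝒜 is differentiable at ε = 0 and 𝒜'(0) = ∫_Ω [div ψ · ∇u·∇φ − ∑_{i,j} (∂ᵢu ∂ⱼφ + ∂ⱼu ∂ᵢφ) ∂ⱼψᵢ] dx. -/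
open MeasureTheory

namespace Stmt18

open Filter Topology

abbrev EE (n : ℕ) := EuclideanSpace ℝ (Fin n)

lemma det_eq {n : ℕ} (M : EE n →L[ℝ] EE n) :
    M.det = Matrix.det (Matrix.of fun i j : Fin n => M (EuclideanSpace.single j 1) i) := by
  rw [ContinuousLinearMap.det,
    ← LinearMap.det_toMatrix (EuclideanSpace.basisFun (Fin n) ℝ).toBasis]
  rfl

lemma contDiff_det {n : ℕ} : ContDiff ℝ 1 (fun M : EE n →L[ℝ] EE n => M.det) := by
  simp_rw [det_eq, Matrix.det_apply]
  refine ContDiff.sum fun σ _ => ContDiff.const_smul _ ?_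
  refine contDiff_prod fun i _ => ?_
  simp only [Matrix.of_apply]
  have : ContDiff ℝ 1 (fun M : EE n →L[ℝ] EE n => M (EuclideanSpace.single i 1)) :=
    contDiff_id.clm_apply contDiff_const
  exact (contDiff_euclidean.1 this) (σ i)

lemma hasDerivAt_det {n : ℕ} (M : EE n →L[ℝ] EE n) :
    HasDerivAt (fun ε : ℝ => (1 + ε • M).det)
      (∑ i : Fin n, M (EuclideanSpace.single i 1) i) 0 := by
  set A : Matrix (Fin n) (Fin n) ℝ := Matrix.of fun i j => M (EuclideanSpace.single j 1) i with hA
  have h : ∀ ε : ℝ, (1 + ε • M).det = (1 + ε • A).det := by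
    intro ε
    rw [det_eq]
    congr 1
    ext i j
    simp [hA, Matrix.one_apply]
  rw [show (fun ε : ℝ => (1 + ε • M).det) = fun ε : ℝ => 1 + A.trace * ε +
    (Matrix.det (1 + (Polynomial.X : Polynomial ℝ) • A.map Polynomial.C)).divX.divX.eval ε * ε ^ 2
    from funext fun ε => (h ε).trans (Matrix.det_one_add_smul ε A)]
  set P := (Matrix.det (1 + (Polynomial.X : Polynomial ℝ) • A.map Polynomial.C)).divX.divX
  have h2 : HasDerivAt (fun ε : ℝ => 1 + A.trace * ε + P.eval ε * ε ^ 2)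
      (0 + A.trace * 1 + ((Polynomial.derivative P).eval 0 * 0 ^ 2 + P.eval 0 * (2 * 0))) 0 := by
    have h3 := (P.hasDerivAt (0:ℝ)).mul (hasDerivAt_pow 2 (0:ℝ))
    refine (((hasDerivAt_const _ _).add ((hasDerivAt_id (0:ℝ)).const_mul _)).add ?_)
    simpa using! h3
  convert h2 using 1
  simp [Matrix.trace, hA]

/-- Integrand after the change of variables. -/
noncomputable def K {n : ℕ}
    (z : ℝ × (EE n →L[ℝ] ℝ) × (EE n →L[ℝ] ℝ) × (EE n →L[ℝ] EE n)) : ℝ :=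
  |(1 + z.1 • z.2.2.2).det| * ∑ i : Fin n,
    z.2.1 (Ring.inverse (1 + z.1 • z.2.2.2) (EuclideanSpace.single i 1)) *
      z.2.2.1 (Ring.inverse (1 + z.1 • z.2.2.2) (EuclideanSpace.single i 1))

lemma det_ne {n : ℕ} {M : EE n →L[ℝ] EE n} (h : IsUnit M) : M.det ≠ 0 := by
  have : IsUnit (LinearMap.det (M : EE n →ₗ[ℝ] EE n)) :=
    (h.map (ContinuousLinearMap.toLinearMapRingHom (R₁ := ℝ) (M₁ := EE n))).map LinearMap.det
  exact this.ne_zero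

lemma contDiffAt_K {n : ℕ} (z : ℝ × (EE n →L[ℝ] ℝ) × (EE n →L[ℝ] ℝ) × (EE n →L[ℝ] EE n))
    (hz : IsUnit (1 + z.1 • z.2.2.2)) : ContDiffAt ℝ 1 K z := by
  have hA : ContDiff ℝ 1 (fun z : ℝ × (EE n →L[ℝ] ℝ) × (EE n →L[ℝ] ℝ) × (EE n →L[ℝ] EE n) =>
      1 + z.1 • z.2.2.2) := by fun_prop
  have hinv : ContDiffAt ℝ 1
      (fun z : ℝ × (EE n →L[ℝ] ℝ) × (EE n →L[ℝ] ℝ) × (EE n →L[ℝ] EE n) =>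
      Ring.inverse (1 + z.1 • z.2.2.2)) z := by
    obtain ⟨v, hv⟩ := hz
    have := contDiffAt_ringInverse (n := 1) ℝ v
    rw [hv] at this
    exact this.comp z hA.contDiffAt
  unfold K
  refine ContDiffAt.mul ?_ (ContDiffAt.sum fun i _ => ContDiffAt.mul ?_ ?_)
  · exact ((contDiff_det.comp hA).contDiffAt).abs (det_ne hz)
  · exact ContDiffAt.clm_apply (by fun_prop) (hinv.clm_apply contDiffAt_const)
  · exact ContDiffAt.clm_apply (by fun_prop) (hinv.clm_apply contDiffAt_const)

lemma hasDerivAt_K {n : ℕ} (p q : EE n →L[ℝ] ℝ) (M : EE n →L[ℝ] EE n) :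
    HasDerivAt (fun ε : ℝ => K (ε, p, q, M))
      ((∑ i : Fin n, M (EuclideanSpace.single i 1) i) *
        ∑ i : Fin n, p (EuclideanSpace.single i 1) * q (EuclideanSpace.single i 1) -
        ∑ i : Fin n, ∑ j : Fin n,
          (p (EuclideanSpace.single i 1) * q (EuclideanSpace.single j 1) +
            p (EuclideanSpace.single j 1) * q (EuclideanSpace.single i 1)) *
            M (EuclideanSpace.single j 1) i) 0 := by
  have hdet : HasDerivAt (fun ε : ℝ => |(1 + ε • M).det|)
      (∑ i : Fin n, M (EuclideanSpace.single i 1) i) 0 := by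
    have h := hasDerivAt_det M
    refine h.congr_of_eventuallyEq ?_
    have h0 : 0 < (fun ε : ℝ => (1 + ε • M).det) 0 := by
      simp [ContinuousLinearMap.det]
    filter_upwards [h.continuousAt.eventually (lt_mem_nhds h0)] with ε hε
    exact abs_of_pos hε
  have hz : (0:ℝ) • M = 0 := zero_smul ℝ M
  have hA : HasDerivAt (fun ε : ℝ => 1 + ε • M) M 0 := by
    simpa using ((hasDerivAt_id (0:ℝ)).smul_const M).const_add 1
  have hinv : HasDerivAt (fun ε : ℝ => Ring.inverse (1 + ε • M)) (-M) 0 := by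
    have h1 := hasFDerivAt_ringInverse (𝕜 := ℝ) (1 : (EE n →L[ℝ] EE n)ˣ)
    have h2 := h1.comp_hasDerivAt_of_eq (0:ℝ) hA (by rw [hz]; simp)
    simpa using! h2
  have hi : ∀ (r : EE n →L[ℝ] ℝ) (v : EE n),
      HasDerivAt (fun ε : ℝ => r (Ring.inverse (1 + ε • M) v)) (-(r (M v))) 0 := by
    intro r v
    have h1 := hinv.clm_apply (hasDerivAt_const (0:ℝ) v)
    have h2 := r.hasFDerivAt.comp_hasDerivAt (0:ℝ) h1
    simpa using! h2
  have hsum := HasDerivAt.fun_sum (u := Finset.univ) fun (i : Fin n) _ =>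
    (hi p (EuclideanSpace.single i 1)).fun_mul (hi q (EuclideanSpace.single i 1))
  have hfin := hdet.fun_mul hsum
  unfold K
  refine HasDerivAt.congr_deriv (f := fun ε : ℝ => K (ε, p, q, M)) hfin ?_
  have hexp : ∀ (r : EE n →L[ℝ] ℝ) (v : EE n),
      r v = ∑ i, r (EuclideanSpace.single i 1) * v i := by
    intro r v
    have hv : v = ∑ i, v i • EuclideanSpace.single i (1:ℝ) := by
      have := ((EuclideanSpace.basisFun (Fin n) ℝ).sum_repr v).symm
      simpa using this
    conv_lhs => rw [hv]
    simp [mul_comm]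
  have h1 : (1 : EE n →L[ℝ] EE n).det = 1 := by simp [ContinuousLinearMap.det]
  simp only [hz, add_zero, Ring.inverse_one, h1, abs_one, one_mul,
    one_apply_eq_self]
  rw [Finset.sum_comm (s := Finset.univ) (t := Finset.univ), sub_eq_add_neg,
    ← Finset.sum_neg_distrib]
  congr 1
  refine Finset.sum_congr rfl fun j _ => ?_
  rw [hexp p (M _), hexp q (M _), neg_mul, mul_neg, ← neg_add, neg_inj, Finset.sum_mul,
    Finset.mul_sum, ← Finset.sum_add_distrib]
  refine Finset.sum_congr rfl fun i _ => ?_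
  ring

lemma isUnit_aux {n : ℕ} {C ε : ℝ} {M : EE n →L[ℝ] EE n} (hM : ‖M‖ ≤ C) (hε : |ε| * C < 1) :
    IsUnit (1 + ε • M) := by
  have h : ‖-(ε • M)‖ < 1 := by
    rw [norm_neg, norm_smul, Real.norm_eq_abs]
    exact lt_of_le_of_lt (mul_le_mul_of_nonneg_left hM (abs_nonneg _)) hε
  have := (Units.oneSub _ h).isUnit
  simpa [Units.val_oneSub] using this

lemma injective_aux {n : ℕ} {C ε : ℝ} {ψ : EE n → EE n} (hψ : ContDiff ℝ 1 ψ)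
    (hC : ∀ x, ‖fderiv ℝ ψ x‖ ≤ C) (hε : |ε| * C < 1) :
    Function.Injective (fun x => x + ε • ψ x) := by
  intro x y hxy
  have h1 : ‖ψ y - ψ x‖ ≤ C * ‖y - x‖ :=
    Convex.norm_image_sub_le_of_norm_fderiv_le (𝕜 := ℝ) (s := Set.univ)
      (fun z _ => (hψ.differentiable (by norm_num)) z) (fun z _ => hC z) convex_univ
      (Set.mem_univ _) (Set.mem_univ _)
  have h2 : y - x = -(ε • (ψ y - ψ x)) := by
    have hxy' : x + ε • ψ x = y + ε • ψ y := hxy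
    rw [smul_sub, neg_sub, sub_eq_sub_iff_add_eq_add, add_comm _ x, hxy']
  have h3 : ‖y - x‖ ≤ |ε| * (C * ‖y - x‖) := by
    conv_lhs => rw [h2, norm_neg, norm_smul, Real.norm_eq_abs]
    exact mul_le_mul_of_nonneg_left h1 (abs_nonneg _)
  have h4 : ‖y - x‖ = 0 := by
    by_contra h
    have : 0 < ‖y - x‖ := lt_of_le_of_ne (norm_nonneg _) (Ne.symm h)
    nlinarith
  exact (sub_eq_zero.1 (norm_eq_zero.1 h4)).symm

lemma fderiv_comp_inv {n : ℕ} {ε : ℝ} {ψ : EE n → EE n} (hψ : ContDiff ℝ 1 ψ)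
    (hinj : Function.Injective (fun x => x + ε • ψ x)) (x : EE n)
    (hU : IsUnit (1 + ε • fderiv ℝ ψ x)) {u : EE n → ℝ} (hu : ContDiff ℝ 2 u) (v : EE n) :
    fderiv ℝ (u ∘ Function.invFun (fun x => x + ε • ψ x)) (x + ε • ψ x) v =
      fderiv ℝ u x (Ring.inverse (1 + ε • fderiv ℝ ψ x) v) := by
  obtain ⟨w, hw⟩ := hU
  have hF : HasStrictFDerivAt (fun x => x + ε • ψ x) (1 + ε • fderiv ℝ ψ x) x :=
    (hasStrictFDerivAt_id x).add
      ((hψ.contDiffAt.hasStrictFDerivAt (by norm_num)).const_smul ε)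
  have hF' : HasStrictFDerivAt (fun x => x + ε • ψ x)
      ((ContinuousLinearEquiv.ofUnit w : EE n ≃L[ℝ] EE n) : EE n →L[ℝ] EE n) x := by
    rw [← hw] at hF
    exact hF
  have hleft := Function.leftInverse_invFun hinj
  have hG := hF'.to_local_left_inverse (g := Function.invFun (fun x => x + ε • ψ x))
    (Eventually.of_forall hleft)
  have hux : HasFDerivAt u (fderiv ℝ u x) (Function.invFun (fun x => x + ε • ψ x) (x + ε • ψ x)) := by
    rw [show Function.invFun (fun x => x + ε • ψ x) (x + ε • ψ x) = x from hleft x]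
    exact (hu.differentiable (by norm_num) x).hasFDerivAt
  have := (hux.comp (x + ε • ψ x) hG.hasFDerivAt).fderiv
  rw [this, ← hw, Ring.inverse_unit]
  rfl

end Stmt18


/-- Derivative of the Dirichlet energy under domain perturbation: for `ψ : ℝⁿ → ℝⁿ`
of class `C¹` with bounded `C¹` norm, `Ω` bounded open, `u, φ ∈ C²(ℝⁿ)`, and
`Ω_ε = (I + εψ)(Ω)`, the function
`𝒜(ε) = ∫_{Ω_ε} ∇(u ∘ (I+εψ)⁻¹) · ∇(φ ∘ (I+εψ)⁻¹)` is differentiable at `ε = 0` with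
`𝒜'(0) = ∫_Ω [div ψ ∇u·∇φ − Σ_{ij} (∂ᵢu ∂ⱼφ + ∂ⱼu ∂ᵢφ) ∂ⱼψᵢ]`. -/
theorem stmt18 {n : ℕ} (ψ : EuclideanSpace ℝ (Fin n) → EuclideanSpace ℝ (Fin n))
    (hψ : ContDiff ℝ 1 ψ) (Cψ : ℝ) (hbound : ∀ x, ‖ψ x‖ + ‖fderiv ℝ ψ x‖ ≤ Cψ)
    (Ω : Set (EuclideanSpace ℝ (Fin n))) (hΩ : IsOpen Ω) (hΩb : Bornology.IsBounded Ω)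
    (u φ : EuclideanSpace ℝ (Fin n) → ℝ) (hu : ContDiff ℝ 2 u) (hφ : ContDiff ℝ 2 φ) :
    HasDerivAt
      (fun ε : ℝ =>
        ∫ ξ in (fun x => x + ε • ψ x) '' Ω,
          ∑ i : Fin n,
            fderiv ℝ (u ∘ Function.invFun (fun x => x + ε • ψ x)) ξ
                (EuclideanSpace.single i 1) *
              fderiv ℝ (φ ∘ Function.invFun (fun x => x + ε • ψ x)) ξ
                (EuclideanSpace.single i 1))
      (∫ x in Ω,
        ((∑ i : Fin n, fderiv ℝ ψ x (EuclideanSpace.single i 1) i) *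
            ∑ i : Fin n,
              fderiv ℝ u x (EuclideanSpace.single i 1) *
                fderiv ℝ φ x (EuclideanSpace.single i 1) -
          ∑ i : Fin n, ∑ j : Fin n,
            (fderiv ℝ u x (EuclideanSpace.single i 1) *
                fderiv ℝ φ x (EuclideanSpace.single j 1) +
              fderiv ℝ u x (EuclideanSpace.single j 1) *
                fderiv ℝ φ x (EuclideanSpace.single i 1)) *
              fderiv ℝ ψ x (EuclideanSpace.single j 1) i))
      0 := by
  have hC : ∀ x, ‖fderiv ℝ ψ x‖ ≤ Cψ := fun x => by
    have := hbound x
    have := norm_nonneg (ψ x)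
    linarith
  have hC0 : 0 ≤ Cψ := (norm_nonneg _).trans (hC 0)
  obtain ⟨δ, hδ0, hδ⟩ : ∃ δ : ℝ, 0 < δ ∧ ∀ ε : ℝ, |ε| ≤ δ → |ε| * Cψ < 1 := by
    refine ⟨1 / (Cψ + 1), by positivity, fun ε hε => ?_⟩
    rw [le_div_iff₀ (by positivity)] at hε
    by_cases h : |ε| = 0
    · rw [h]; norm_num
    · have : 0 < |ε| := lt_of_le_of_ne (abs_nonneg _) (Ne.symm h)
      linarith
  have hdψ : Continuous (fderiv ℝ ψ) := hψ.continuous_fderiv (by norm_num)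
  have hdu : Continuous (fderiv ℝ u) := hu.continuous_fderiv (by norm_num)
  have hdφ : Continuous (fderiv ℝ φ) := hφ.continuous_fderiv (by norm_num)
  let Z : ℝ × EuclideanSpace ℝ (Fin n) → _ :=
    fun y => (y.1, fderiv ℝ u y.2, fderiv ℝ φ y.2, fderiv ℝ ψ y.2)
  have hZ : Continuous Z := by fun_prop
  have hK : ∀ ε : ℝ, |ε| ≤ δ → ∀ x, ContDiffAt ℝ 1 Stmt18.K (Z (ε, x)) := fun ε hε x =>
    Stmt18.contDiffAt_K _ (Stmt18.isUnit_aux (hC x) (hδ ε hε))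
  let K' : ℝ → EuclideanSpace ℝ (Fin n) → ℝ := fun ε x => fderiv ℝ Stmt18.K (Z (ε, x)) (1, 0)
  have hcK' : ContinuousOn (fun y : ℝ × EuclideanSpace ℝ (Fin n) => K' y.1 y.2)
      (Metric.closedBall 0 δ ×ˢ Set.univ) := by
    rintro ⟨ε, x⟩ ⟨hε, -⟩
    have h1 : |ε| ≤ δ := by simpa using hε
    have h2 : ContinuousAt (fderiv ℝ Stmt18.K) (Z (ε, x)) :=
      (hK ε h1 x).continuousAt_fderiv (by norm_num)
    have h3 : ContinuousAt (fun y => fderiv ℝ Stmt18.K (Z y)) (ε, x) :=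
      ContinuousAt.comp (f := Z) h2 hZ.continuousAt
    exact (h3.clm_apply continuousAt_const).continuousWithinAt
  have hcK : ∀ ε : ℝ, |ε| ≤ δ → Continuous (fun x => Stmt18.K (Z (ε, x))) := fun ε hε =>
    continuous_iff_continuousAt.2 fun x =>
      ContinuousAt.comp (f := fun x => Z (ε, x)) (hK ε hε x).continuousAt (by fun_prop)
  have hcpt : IsCompact (closure Ω) := hΩb.isCompact_closure
  obtain ⟨B, hB⟩ := ((isCompact_closedBall (0:ℝ) δ).prod hcpt).exists_bound_of_continuousOn
    (hcK'.mono (Set.prod_mono_right (Set.subset_univ _)))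
  have hfin : volume Ω ≠ ⊤ := hΩb.measure_lt_top.ne
  have hderiv : ∀ ε : ℝ, |ε| ≤ δ → ∀ x,
      HasDerivAt (fun ε => Stmt18.K (Z (ε, x))) (K' ε x) ε := by
    intro ε hε x
    have h1 := ((hK ε hε x).differentiableAt (by norm_num)).hasFDerivAt
    have h2 : HasDerivAt (fun ε => Z (ε, x)) (1, 0) ε :=
      (hasDerivAt_id ε).prodMk 
        (hasDerivAt_const ε (fderiv ℝ u x, fderiv ℝ φ x, fderiv ℝ ψ x))
    exact h1.comp_hasDerivAt ε h2
  have hmain := (hasDerivAt_integral_of_dominated_loc_of_deriv_le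
    (μ := volume.restrict Ω) (F := fun ε x => Stmt18.K (Z (ε, x))) (F' := K') (x₀ := (0:ℝ))
    (s := Metric.closedBall 0 δ) (bound := fun _ => B)
    (Metric.closedBall_mem_nhds _ hδ0) ?_ ?_ ?_ ?_ ?_ ?_).2
  · have hrhs : ∀ x, K' 0 x = _ := fun x => (hderiv 0 (by simpa using hδ0.le) x).unique
      (Stmt18.hasDerivAt_K (fderiv ℝ u x) (fderiv ℝ φ x) (fderiv ℝ ψ x))
    simp_rw [hrhs] at hmain
    refine hmain.congr_of_eventuallyEq ?_
    filter_upwards [Metric.closedBall_mem_nhds (0:ℝ) hδ0] with ε hε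
    have h1 : |ε| ≤ δ := by simpa using hε
    have hinj := Stmt18.injective_aux hψ hC (hδ ε h1)
    rw [integral_image_eq_integral_abs_det_fderiv_smul volume hΩ.measurableSet
      (f := fun x => x + ε • ψ x) (f' := fun x => 1 + ε • fderiv ℝ ψ x) ?_ hinj.injOn]
    · refine setIntegral_congr_fun hΩ.measurableSet fun x _ => ?_
      have hU := Stmt18.isUnit_aux (hC x) (hδ ε h1)
      simp only [Stmt18.fderiv_comp_inv hψ hinj x hU hu, Stmt18.fderiv_comp_inv hψ hinj x hU hφ]
      rfl
    · intro x _
      exact ((hasFDerivAt_id x).add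
        (((hψ.differentiable (by norm_num)) x).hasFDerivAt.const_smul ε)).hasFDerivWithinAt
  · filter_upwards [Metric.closedBall_mem_nhds (0:ℝ) hδ0] with ε hε
    exact (hcK ε (by simpa using hε)).aestronglyMeasurable
  · exact ((hcK 0 (by simpa using hδ0.le)).continuousOn.integrableOn_compact hcpt).mono_set
      subset_closure
  · have : Continuous (K' 0) := by
      rw [← continuousOn_univ]
      exact hcK'.comp (f := fun x => ((0:ℝ), x)) (by fun_prop)
        (fun x _ => ⟨by simpa using hδ0.le, Set.mem_univ _⟩)
    exact this.aestronglyMeasurable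
  · refine (ae_restrict_iff' hΩ.measurableSet).2 (Filter.Eventually.of_forall fun x hx ε hε => ?_)
    exact hB (ε, x) ⟨hε, subset_closure hx⟩
  · exact integrableOn_const hfin
  · exact Filter.Eventually.of_forall fun x ε hε => hderiv ε (by simpa using hε) x
end
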